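/- Assume F : ℝ → ℝ is continuous with F(0) = 0 and F(x) > 0 for all x ≠ 0. For every integer ℓ ≥ 2 there exists ε* > 0 such that for all ε > ε* and each integer k with 2 ≤ k ≤ ℓ there exists β* ∈ (k, k+1) with ψ^ε(β*) = β*; together with the fixed point β = 2 this gives at least ℓ fixed points of ψ^ε on [2, ∞). -/

import Mathlib

/-- The orbit of `1` under the β-map `T_β(x) = βx mod 1`: `t₀ = 1`,
`t_{n+1} = β t_n − ⌊β t_n⌋`. -/
noncomputable def betaOrbit (β : ℝ) : ℕ → ℝ
  | 0 => 1
  | n + 1 => Int.fract (β * betaOrbit β n)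

/-- `E(β) = (∑ t_n(β)²/(2βⁿ)) / (∑ t_n(β)/βⁿ)`, the expectation of the unique acim of
the β-map. -/
noncomputable def Ebeta (β : ℝ) : ℝ :=
  (∑' n : ℕ, (betaOrbit β n) ^ 2 / (2 * β ^ n)) / (∑' n : ℕ, betaOrbit β n / β ^ n)

/-- `ψ^ε(β) = 2 + ε F(1/E(β) − 2)`. -/
noncomputable def psi (ε : ℝ) (F : ℝ → ℝ) (β : ℝ) : ℝ :=
  2 + ε * F (1 / Ebeta β - 2)

/-!
The mean `E` is continuous on `(1, ∞)`, although the individual `t_n` are not: they are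
right-continuous, and their left limits `s_n` form the orbit of `1` under `βx mod 1` with values
taken in `(0, 1]`. The two orbits differ only if `t_N = 0` for some least `N`; then `t` stops while
`s` repeats its first `N` entries periodically, so that both series for `s` are those for `t`
multiplied by the same factor `(1 - β^{-N})⁻¹`, which cancels in the quotient.

Since `t_n² ≤ t_n`, one has `E ≤ 1/2`, with equality at the integers and strict inequality
elsewhere. Hence `ψ^ε(k + 1) = 2 < k + 1`, whereas `ψ^ε(k + 1/2) → ∞` as `ε → ∞`, and the
intermediate value theorem gives a fixed point between `k + 1/2` and `k + 1`.
-/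

open Filter Function Set Topology

section DiscountedSum

/-- The power series `∑ aₙ β⁻ⁿ` in `β⁻¹`, used with `a = t` and `a = t²` for an orbit `t`. -/
noncomputable def discountedSum (a : ℕ → ℝ) (β : ℝ) : ℝ := ∑' n, a n / β ^ n

/-- The mean of the probability density proportional to `∑ β⁻ⁿ 𝟙_{[0, aₙ)}`, in closed form, for a
sequence `a` in `[0, 1]`. -/
noncomputable def densityMean (a : ℕ → ℝ) (β : ℝ) : ℝ :=
  discountedSum (a ^ 2) β / (2 * discountedSum a β)

variable {a b : ℕ → ℝ} {β C : ℝ}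

lemma summable_const_div_pow (C : ℝ) (hβ : 1 < β) : Summable fun n : ℕ => C / β ^ n := by
  simpa only [div_eq_mul_inv, inv_pow] using
    (summable_geometric_of_lt_one (by positivity) (inv_lt_one_of_one_lt₀ hβ)).mul_left C

lemma summable_div_pow_of_abs_le (ha : ∀ n, |a n| ≤ C) (hβ : 1 < β) :
    Summable fun n => a n / β ^ n := by
  refine (summable_const_div_pow C hβ).of_norm_bounded fun n => ?_
  rw [Real.norm_eq_abs, abs_div, abs_of_pos (show 0 < β ^ n by positivity)]
  gcongr
  exact ha n

lemma tendsto_discountedSum {ι : Type*} {l : Filter ι} {u : ι → ℕ → ℝ} {v : ι → ℝ}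
    (hβ : 1 < β) (hu : ∀ i n, |u i n| ≤ C) (hua : ∀ n, Tendsto (u · n) l (𝓝 (a n)))
    (hv : Tendsto v l (𝓝 β)) :
    Tendsto (fun i => discountedSum (u i) (v i)) l (𝓝 (discountedSum a β)) := by
  obtain ⟨ρ, hρ, hρβ⟩ := exists_between hβ
  refine tendsto_tsum_of_dominated_convergence (summable_const_div_pow C hρ)
    (fun n => (hua n).div (hv.pow n) (by positivity)) ?_
  filter_upwards [hv.eventually_const_lt hρβ] with i hi n
  have hv_pos : 0 < v i := by linarith
  have hC : 0 ≤ C := (abs_nonneg _).trans (hu i n)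
  rw [Real.norm_eq_abs, abs_div, abs_of_pos (pow_pos hv_pos n)]
  gcongr
  exact hu i n

lemma discountedSum_pos (ha : 0 ≤ a) (ha0 : 0 < a 0) (hβ : 0 ≤ β)
    (hs : Summable fun n => a n / β ^ n) : 0 < discountedSum a β :=
  hs.tsum_pos (fun n => div_nonneg (ha n) (pow_nonneg hβ n)) 0 (by simpa using ha0)

lemma discountedSum_eq_of_periodic {N : ℕ} (hb : Periodic b N) (hab : ∀ n < N, a n = b n)
    (ha : ∀ n, N ≤ n → a n = 0) (hs : Summable fun n => b n / β ^ n) :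
    discountedSum a β = (1 - (β ^ N)⁻¹) * discountedSum b β := by
  have head : discountedSum a β = ∑ n ∈ Finset.range N, b n / β ^ n := by
    rw [discountedSum, tsum_eq_sum (s := Finset.range N)]
    · exact Finset.sum_congr rfl fun n hn => by rw [hab n (Finset.mem_range.1 hn)]
    · intro n hn
      rw [ha n (by simpa using hn), zero_div]
  have tail : ∑' n, b (n + N) / β ^ (n + N) = (β ^ N)⁻¹ * discountedSum b β := by
    rw [discountedSum, ← tsum_mul_left]
    congr! 2 with n
    rw [hb n, pow_add, div_mul_eq_div_div, div_eq_inv_mul _ (β ^ N)]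
  have split : discountedSum a β + (β ^ N)⁻¹ * discountedSum b β = discountedSum b β := by
    rw [head, ← tail]
    exact hs.sum_add_tsum_nat_add N
  linear_combination split

lemma abs_pow_apply_le_one (ha : ∀ n, a n ∈ Icc (0 : ℝ) 1) (p n : ℕ) : |(a ^ p) n| ≤ 1 := by
  rw [Pi.pow_apply, abs_pow, abs_of_nonneg (ha n).1]
  exact pow_le_one₀ (ha n).1 (ha n).2

lemma summable_pow_apply_div_pow (ha : ∀ n, a n ∈ Icc (0 : ℝ) 1) (p : ℕ) (hβ : 1 < β) :
    Summable fun n => (a ^ p) n / β ^ n :=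
  summable_div_pow_of_abs_le (abs_pow_apply_le_one ha p) hβ

lemma discountedSum_pow_pos (ha : ∀ n, a n ∈ Icc (0 : ℝ) 1) (ha0 : 0 < a 0) (p : ℕ)
    (hβ : 1 < β) : 0 < discountedSum (a ^ p) β :=
  discountedSum_pos (fun n => pow_nonneg (ha n).1 p) (pow_pos ha0 p) (by linarith)
    (summable_pow_apply_div_pow ha p hβ)

lemma densityMean_pos (ha : ∀ n, a n ∈ Icc (0 : ℝ) 1) (ha0 : 0 < a 0) (hβ : 1 < β) :
    0 < densityMean a β := by
  have hden : 0 < discountedSum a β := by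
    simpa only [pow_one] using discountedSum_pow_pos ha ha0 1 hβ
  exact div_pos (discountedSum_pow_pos ha ha0 2 hβ) (by positivity)

lemma densityMean_le_half (ha : ∀ n, a n ∈ Icc (0 : ℝ) 1) (hβ : 1 < β) :
    densityMean a β ≤ 1 / 2 := by
  have hle : discountedSum (a ^ 2) β ≤ discountedSum (a ^ 1) β := by
    refine (summable_pow_apply_div_pow ha 2 hβ).tsum_le_tsum (fun n => ?_)
      (summable_pow_apply_div_pow ha 1 hβ)
    gcongr ?_ / _
    exact pow_le_pow_of_le_one (ha n).1 (ha n).2 one_le_two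
  have hden : 0 ≤ discountedSum a β :=
    tsum_nonneg fun n => div_nonneg (ha n).1 (by positivity)
  rw [pow_one] at hle
  exact div_le_of_le_mul₀ (by positivity) (by norm_num) (by linarith)

lemma densityMean_lt_half (ha : ∀ n, a n ∈ Icc (0 : ℝ) 1) {m : ℕ} (hm : a m ∈ Ioo (0 : ℝ) 1)
    (hβ : 1 < β) : densityMean a β < 1 / 2 := by
  have hlt : discountedSum (a ^ 2) β < discountedSum (a ^ 1) β := by
    refine Summable.tsum_lt_tsum (i := m) (fun n => ?_) ?_ (summable_pow_apply_div_pow ha 2 hβ)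
      (summable_pow_apply_div_pow ha 1 hβ)
    · gcongr ?_ / _
      exact pow_le_pow_of_le_one (ha n).1 (ha n).2 one_le_two
    · gcongr ?_ / _
      exact pow_lt_pow_right_of_lt_one₀ hm.1 hm.2 one_lt_two
  have hnum : 0 ≤ discountedSum (a ^ 2) β :=
    tsum_nonneg fun n => div_nonneg (sq_nonneg (a n)) (by positivity)
  rw [pow_one] at hlt
  have hden : 0 < discountedSum a β := hnum.trans_lt hlt
  rw [densityMean, div_lt_iff₀ (by positivity)]
  linarith

lemma densityMean_eq_half (ha : a ^ 2 = a) (hden : discountedSum a β ≠ 0) :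
    densityMean a β = 1 / 2 := by
  rw [densityMean, ha]
  field_simp

lemma tendsto_densityMean {ι : Type*} {l : Filter ι} {u : ι → ℕ → ℝ} {v : ι → ℝ}
    (hβ : 1 < β) (hu : ∀ i n, u i n ∈ Icc (0 : ℝ) 1) (hua : ∀ n, Tendsto (u · n) l (𝓝 (a n)))
    (hden : discountedSum a β ≠ 0) (hv : Tendsto v l (𝓝 β)) :
    Tendsto (fun i => densityMean (u i) (v i)) l (𝓝 (densityMean a β)) := by
  have htendsto (p : ℕ) :
      Tendsto (fun i => discountedSum (u i ^ p) (v i)) l (𝓝 (discountedSum (a ^ p) β)) :=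
    tendsto_discountedSum hβ (fun i => abs_pow_apply_le_one (hu i) p) (fun n => (hua n).pow p) hv
  have hone := htendsto 1
  simp only [pow_one] at hone
  exact (htendsto 2).div (hone.const_mul 2) (mul_ne_zero two_ne_zero hden)

lemma densityMean_eq_of_periodic {N : ℕ} (hN : N ≠ 0) (hb : Periodic b N)
    (hab : ∀ n < N, a n = b n) (ha : ∀ n, N ≤ n → a n = 0) (hbI : ∀ n, b n ∈ Icc (0 : ℝ) 1)
    (hβ : 1 < β) : densityMean a β = densityMean b β := by
  have hscale (p : ℕ) (hp : p ≠ 0) :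
      discountedSum (a ^ p) β = (1 - (β ^ N)⁻¹) * discountedSum (b ^ p) β :=
    discountedSum_eq_of_periodic (hb.comp (· ^ p))
      (fun n hn => by simp only [Pi.pow_apply, hab n hn])
      (fun n hn => by simp only [Pi.pow_apply, ha n hn, zero_pow hp])
      (summable_pow_apply_div_pow hbI p hβ)
  have hone := hscale 1 one_ne_zero
  simp only [pow_one] at hone
  have hfactor : 1 - (β ^ N)⁻¹ ≠ 0 :=
    (sub_pos.2 (inv_lt_one_of_one_lt₀ (one_lt_pow₀ hβ hN))).ne'
  rw [densityMean, hscale 2 two_ne_zero, hone, mul_left_comm, mul_div_mul_left _ _ hfactor,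
    densityMean]

end DiscountedSum

section Fract

variable {R : Type*} [Ring R] [LinearOrder R] [IsStrictOrderedRing R] [FloorRing R]
  [TopologicalSpace R] [OrderClosedTopology R] [IsTopologicalAddGroup R]

lemma tendsto_fract_nhdsGE (x : R) : Tendsto Int.fract (𝓝[≥] x) (𝓝[≥] (Int.fract x)) := by
  have hfract : (fun y => y - (⌊x⌋ : R)) =ᶠ[𝓝[≥] x] Int.fract := by
    filter_upwards [tendsto_pure.1 (tendsto_floor_right_pure_floor x)] with y hy
    rw [← hy, Int.self_sub_floor]
  have hsub : Tendsto (fun y => y - (⌊x⌋ : R)) (𝓝[≥] x) (𝓝[≥] (x - ⌊x⌋)) :=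
    (continuous_sub_right (⌊x⌋ : R)).continuousWithinAt.tendsto_nhdsWithin
      fun y hy => sub_le_sub_right hy _
  simpa only [Int.self_sub_floor] using hsub.congr' hfract

lemma tendsto_fract_nhdsLT (x : R) :
    Tendsto Int.fract (𝓝[<] x) (𝓝[<] (1 - Int.fract (-x))) := by
  have hfract : (fun y => y - ((⌈x⌉ - 1 : ℤ) : R)) =ᶠ[𝓝[<] x] Int.fract := by
    filter_upwards [tendsto_pure.1 (tendsto_floor_left_pure_ceil_sub_one x)] with y hy
    rw [← hy, Int.self_sub_floor]
  have hsub : Tendsto (fun y => y - ((⌈x⌉ - 1 : ℤ) : R)) (𝓝[<] x)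
      (𝓝[<] (x - ((⌈x⌉ - 1 : ℤ) : R))) :=
    (continuous_sub_right _).continuousWithinAt.tendsto_nhdsWithin
      fun y hy => sub_lt_sub_right hy _
  have hlim : x - ((⌈x⌉ - 1 : ℤ) : R) = 1 - Int.fract (-x) := by
    rw [Int.fract, Int.floor_neg]
    push_cast
    abel
  exact hlim ▸ hsub.congr' hfract

end Fract

section Orbits

/-- The orbit of `1` under `x ↦ βx mod 1` with values taken in `(0, 1]`: `1 - Int.fract (-x)` is the
representative of `x` in that interval. It is the limit of `betaOrbit` from the left in `β`. -/
noncomputable def leftBetaOrbit (β : ℝ) : ℕ → ℝ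
  | 0 => 1
  | n + 1 => 1 - Int.fract (-(β * leftBetaOrbit β n))

variable {β : ℝ}

lemma betaOrbit_mem_Icc (β : ℝ) : ∀ n, betaOrbit β n ∈ Icc (0 : ℝ) 1
  | 0 => ⟨zero_le_one, le_rfl⟩
  | _ + 1 => ⟨Int.fract_nonneg _, (Int.fract_lt_one _).le⟩

lemma leftBetaOrbit_mem_Ioc (β : ℝ) : ∀ n, leftBetaOrbit β n ∈ Ioc (0 : ℝ) 1
  | 0 => ⟨zero_lt_one, le_rfl⟩
  | _ + 1 => ⟨sub_pos.2 (Int.fract_lt_one _), sub_le_self _ (Int.fract_nonneg _)⟩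

lemma betaOrbit_one (β : ℝ) : betaOrbit β 1 = Int.fract β := by
  simp only [betaOrbit, mul_one]

lemma betaOrbit_eq_zero_of_le {N n : ℕ} (hN : betaOrbit β N = 0) (hn : N ≤ n) :
    betaOrbit β n = 0 := by
  induction n, hn using Nat.le_induction with
  | base => exact hN
  | succ n _ ih => rw [betaOrbit, ih, mul_zero, Int.fract_zero]

lemma leftBetaOrbit_eq_betaOrbit {n : ℕ} (h : ∀ m ≤ n, betaOrbit β m ≠ 0) :
    leftBetaOrbit β n = betaOrbit β n := by
  induction n with
  | zero => rfl
  | succ n ih =>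
    have hfract : Int.fract (β * betaOrbit β n) ≠ 0 := h (n + 1) le_rfl
    rw [leftBetaOrbit, ih fun m hm => h m (by lia), Int.fract_neg hfract, sub_sub_cancel, betaOrbit]

lemma leftBetaOrbit_eq_one {N : ℕ} (hN : betaOrbit β N = 0)
    (hmin : ∀ m < N, betaOrbit β m ≠ 0) : leftBetaOrbit β N = 1 := by
  cases N with
  | zero => rfl
  | succ n =>
    rw [leftBetaOrbit, leftBetaOrbit_eq_betaOrbit fun m hm => hmin m (by lia),
      Int.fract_neg_eq_zero.2 hN, sub_zero]

lemma leftBetaOrbit_periodic {N : ℕ} (hN : leftBetaOrbit β N = 1) :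
    Periodic (leftBetaOrbit β) N := by
  intro n
  induction n with
  | zero => rw [zero_add, hN, leftBetaOrbit]
  | succ n ih => rw [Nat.add_right_comm, leftBetaOrbit, ih, leftBetaOrbit]

lemma tendsto_betaOrbit_nhdsGT (hβ : 0 ≤ β) (n : ℕ) :
    Tendsto (betaOrbit · n) (𝓝[>] β) (𝓝[≥] (betaOrbit β n)) := by
  induction n with
  | zero => exact tendsto_const_pure.mono_right (pure_le_nhdsWithin self_mem_Ici)
  | succ n ih =>
    obtain ⟨hlim, hge⟩ := tendsto_nhdsWithin_iff.1 ih
    have hmul : Tendsto (fun b => b * betaOrbit b n) (𝓝[>] β) (𝓝[≥] (β * betaOrbit β n)) := by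
      refine tendsto_nhdsWithin_iff.2 ⟨(tendsto_id.mono_left nhdsWithin_le_nhds).mul hlim, ?_⟩
      filter_upwards [hge, self_mem_nhdsWithin] with b hb hβb
      exact mul_le_mul (le_of_lt hβb) hb (betaOrbit_mem_Icc β n).1 (hβ.trans (le_of_lt hβb))
    exact (tendsto_fract_nhdsGE _).comp hmul

lemma tendsto_betaOrbit_nhdsLT (hβ : 0 < β) (n : ℕ) :
    Tendsto (betaOrbit · n) (𝓝[<] β) (𝓝[≤] (leftBetaOrbit β n)) := by
  induction n with
  | zero => exact tendsto_const_pure.mono_right (pure_le_nhdsWithin self_mem_Iic)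
  | succ n ih =>
    obtain ⟨hlim, hle⟩ := tendsto_nhdsWithin_iff.1 ih
    have hmul : Tendsto (fun b => b * betaOrbit b n) (𝓝[<] β) (𝓝[<] (β * leftBetaOrbit β n)) := by
      refine tendsto_nhdsWithin_iff.2 ⟨(tendsto_id.mono_left nhdsWithin_le_nhds).mul hlim, ?_⟩
      filter_upwards [hle, Ioo_mem_nhdsLT hβ] with b hb hbβ
      calc b * betaOrbit b n ≤ b * leftBetaOrbit β n := mul_le_mul_of_nonneg_left hb hbβ.1.le
        _ < β * leftBetaOrbit β n := mul_lt_mul_of_pos_right hbβ.2 (leftBetaOrbit_mem_Ioc β n).1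
    exact ((tendsto_fract_nhdsLT _).comp hmul).mono_right (nhdsWithin_mono _ Iio_subset_Iic_self)

end Orbits

section Mean

variable {β : ℝ}

lemma Ebeta_eq_densityMean (β : ℝ) : Ebeta β = densityMean (betaOrbit β) β := by
  simp only [Ebeta, densityMean, discountedSum, Pi.pow_apply, div_mul_eq_div_div_swap,
    tsum_div_const]
  rw [div_right_comm]

lemma densityMean_leftBetaOrbit (hβ : 1 < β) :
    densityMean (leftBetaOrbit β) β = densityMean (betaOrbit β) β := by
  by_cases hzero : ∃ n, betaOrbit β n = 0
  · obtain ⟨N, hN, hmin⟩ : ∃ N, betaOrbit β N = 0 ∧ ∀ m < N, betaOrbit β m ≠ 0 :=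
      ⟨Nat.find hzero, Nat.find_spec hzero, fun _ => Nat.find_min hzero⟩
    have hN0 : N ≠ 0 := by
      rintro rfl
      exact one_ne_zero hN
    refine (densityMean_eq_of_periodic hN0 (leftBetaOrbit_periodic (leftBetaOrbit_eq_one hN hmin))
      (fun n hn => ?_) (fun n => betaOrbit_eq_zero_of_le hN)
      (fun n => Ioc_subset_Icc_self (leftBetaOrbit_mem_Ioc β n)) hβ).symm
    exact (leftBetaOrbit_eq_betaOrbit fun m hm => hmin m (hm.trans_lt hn)).symm
  · push Not at hzero
    congr 1 with n
    exact leftBetaOrbit_eq_betaOrbit fun m _ => hzero m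

lemma tendsto_Ebeta {l : Filter ℝ} {s : ℕ → ℝ} (hβ : 1 < β) (hl : l ≤ 𝓝 β)
    (hlim : ∀ n, Tendsto (betaOrbit · n) l (𝓝 (s n))) (hs : ∀ n, s n ∈ Icc (0 : ℝ) 1)
    (hs0 : 0 < s 0) : Tendsto Ebeta l (𝓝 (densityMean s β)) := by
  have hden : 0 < discountedSum s β := by
    simpa only [pow_one] using discountedSum_pow_pos hs hs0 1 hβ
  simpa only [id, ← Ebeta_eq_densityMean] using
    tendsto_densityMean hβ betaOrbit_mem_Icc hlim hden.ne' (tendsto_id.mono_left hl)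

lemma continuousAt_Ebeta (hβ : 1 < β) : ContinuousAt Ebeta β := by
  have hβ0 : 0 < β := zero_lt_one.trans hβ
  have hleft : Tendsto Ebeta (𝓝[<] β) (𝓝 (densityMean (leftBetaOrbit β) β)) :=
    tendsto_Ebeta hβ nhdsWithin_le_nhds
      (fun n => (tendsto_betaOrbit_nhdsLT hβ0 n).mono_right nhdsWithin_le_nhds)
      (fun n => Ioc_subset_Icc_self (leftBetaOrbit_mem_Ioc β n)) zero_lt_one
  have hright : Tendsto Ebeta (𝓝[>] β) (𝓝 (densityMean (betaOrbit β) β)) :=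
    tendsto_Ebeta hβ nhdsWithin_le_nhds
      (fun n => (tendsto_betaOrbit_nhdsGT hβ0.le n).mono_right nhdsWithin_le_nhds)
      (betaOrbit_mem_Icc β) zero_lt_one
  rw [densityMean_leftBetaOrbit hβ, ← Ebeta_eq_densityMean] at hleft
  rw [← Ebeta_eq_densityMean] at hright
  exact continuousAt_iff_continuous_left'_right'.2 ⟨hleft, hright⟩

lemma Ebeta_pos (hβ : 1 < β) : 0 < Ebeta β := by
  rw [Ebeta_eq_densityMean]
  exact densityMean_pos (betaOrbit_mem_Icc β) zero_lt_one hβ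

lemma Ebeta_le_half (hβ : 1 < β) : Ebeta β ≤ 1 / 2 := by
  rw [Ebeta_eq_densityMean]
  exact densityMean_le_half (betaOrbit_mem_Icc β) hβ

lemma Ebeta_lt_half (hβ : 1 < β) (hfract : Int.fract β ≠ 0) : Ebeta β < 1 / 2 := by
  rw [Ebeta_eq_densityMean]
  refine densityMean_lt_half (betaOrbit_mem_Icc β) (m := 1) ?_ hβ
  rw [betaOrbit_one]
  exact ⟨(Int.fract_nonneg β).lt_of_ne' hfract, Int.fract_lt_one β⟩

lemma Ebeta_eq_half (hβ : 1 < β) (hfract : Int.fract β = 0) : Ebeta β = 1 / 2 := by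
  have hsq : betaOrbit β ^ 2 = betaOrbit β := by
    ext n
    cases n with
    | zero => exact one_pow 2
    | succ n =>
      have hzero : betaOrbit β (n + 1) = 0 :=
        betaOrbit_eq_zero_of_le ((betaOrbit_one β).trans hfract) (by lia)
      rw [Pi.pow_apply, hzero, zero_pow two_ne_zero]
  have hden : 0 < discountedSum (betaOrbit β ^ 2) β :=
    discountedSum_pow_pos (betaOrbit_mem_Icc β) zero_lt_one 2 hβ
  rw [hsq] at hden
  rw [Ebeta_eq_densityMean, densityMean_eq_half hsq hden.ne']

lemma one_div_Ebeta_sub_two_nonneg (hβ : 1 < β) : 0 ≤ 1 / Ebeta β - 2 := by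
  rw [sub_nonneg, le_one_div two_pos (Ebeta_pos hβ)]
  exact Ebeta_le_half hβ

lemma one_div_Ebeta_sub_two_pos (hβ : 1 < β) (hfract : Int.fract β ≠ 0) :
    0 < 1 / Ebeta β - 2 := by
  rw [sub_pos, lt_one_div two_pos (Ebeta_pos hβ)]
  exact Ebeta_lt_half hβ hfract

end Mean

section FixedPoints

variable {F : ℝ → ℝ} {β ε : ℝ}

lemma continuousOn_psi (hF : ContinuousOn F (Ici 0)) (ε : ℝ) :
    ContinuousOn (psi ε F) (Ioi 1) := by
  have harg : ContinuousOn (fun β => 1 / Ebeta β - 2) (Ioi 1) := fun β hβ =>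
    ((continuousAt_const.div (continuousAt_Ebeta hβ) (Ebeta_pos hβ).ne').sub
      continuousAt_const).continuousWithinAt
  exact continuousOn_const.add <|
    continuousOn_const.mul (hF.comp harg fun _ => one_div_Ebeta_sub_two_nonneg)

lemma psi_eq_two (hF0 : F 0 = 0) (hβ : 1 < β) (hfract : Int.fract β = 0) : psi ε F β = 2 := by
  rw [psi, Ebeta_eq_half hβ hfract, one_div_one_div, sub_self, hF0, mul_zero, add_zero]

lemma tendsto_psi_atTop (hF : 0 < F (1 / Ebeta β - 2)) :
    Tendsto (fun ε => psi ε F β) atTop atTop :=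
  tendsto_atTop_add_const_left _ _ (tendsto_id.atTop_mul_const hF)

lemma exists_psi_eq_self {a b : ℝ} (hF : ContinuousOn F (Ici 0)) (ha : 1 < a) (hab : a ≤ b)
    (hlt : a < psi ε F a) (hgt : psi ε F b < b) : ∃ β ∈ Ioo a b, psi ε F β = β := by
  have hcont : ContinuousOn (fun β => psi ε F β - β) (Icc a b) :=
    ((continuousOn_psi hF ε).mono fun β hβ => ha.trans_le hβ.1).sub continuousOn_id
  obtain ⟨β, hβ, hzero⟩ := intermediate_value_Ioo' hab hcont ⟨sub_neg.2 hgt, sub_pos.2 hlt⟩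
  exact ⟨β, hβ, sub_eq_zero.1 hzero⟩

lemma eventually_exists_psi_eq_self (hF : ContinuousOn F (Ici 0)) (hF0 : F 0 = 0)
    (hFpos : ∀ x, 0 < x → 0 < F x) {k : ℕ} (hk : 2 ≤ k) :
    ∀ᶠ ε in atTop, ∃ β ∈ Ioo (k : ℝ) (k + 1), psi ε F β = β := by
  have hk' : (2 : ℝ) ≤ k := by exact_mod_cast hk
  have hfract_mid : Int.fract ((k : ℝ) + 1 / 2) ≠ 0 := by
    rw [Int.fract_natCast_add, Int.fract_eq_self.2 (by norm_num)]
    norm_num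
  have hpos : 0 < F (1 / Ebeta (k + 1 / 2) - 2) :=
    hFpos _ (one_div_Ebeta_sub_two_pos (by linarith) hfract_mid)
  filter_upwards [(tendsto_psi_atTop hpos).eventually_gt_atTop ((k : ℝ) + 1 / 2)] with ε hε
  have hright : psi ε F (k + 1) = 2 := psi_eq_two hF0 (by linarith) (by simp)
  obtain ⟨β, hβ, hfix⟩ :=
    exists_psi_eq_self hF (by linarith) (by linarith) hε (b := k + 1) (by linarith)
  exact ⟨β, ⟨by linarith [hβ.1], hβ.2⟩, hfix⟩

end FixedPoints

theorem stmt12_general {F : ℝ → ℝ} (hFc : ContinuousOn F (Ici 0)) (hF0 : F 0 = 0)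
    (hFpos : ∀ x : ℝ, 0 < x → 0 < F x) (ℓ : ℕ) :
    ∃ ε₀ > (0 : ℝ), ∀ ε : ℝ, ε₀ < ε →
      psi ε F 2 = 2 ∧
      ∀ k : ℕ, 2 ≤ k → k ≤ ℓ →
        ∃ β : ℝ, (k : ℝ) < β ∧ β < (k : ℝ) + 1 ∧ psi ε F β = β := by
  have hfix : ∀ᶠ ε in atTop, ∀ k ∈ Finset.Icc 2 ℓ, ∃ β ∈ Ioo (k : ℝ) (k + 1), psi ε F β = β :=
    (eventually_all_finset _).2 fun k hk =>
      eventually_exists_psi_eq_self hFc hF0 hFpos (Finset.mem_Icc.1 hk).1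
  obtain ⟨ε₀, hε₀, h⟩ := (atTop_basis_Ioi' (0 : ℝ)).eventually_iff.1 hfix
  refine ⟨ε₀, hε₀, fun ε hε => ⟨psi_eq_two hF0 one_lt_two (by simp), fun k hk2 hkℓ => ?_⟩⟩
  obtain ⟨β, ⟨hkβ, hβk⟩, hβ⟩ := h hε k (Finset.mem_Icc.2 ⟨hk2, hkℓ⟩)
  exact ⟨β, hkβ, hβk, hβ⟩

/-- Strong self-consistency: for every `ℓ ≥ 2` there is `ε* > 0` such that for all
`ε > ε*`, `ψ^ε` has a fixed point in each interval `(k, k+1)`, `2 ≤ k ≤ ℓ`;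
together with the fixed point `β = 2` this gives at least `ℓ` fixed points. -/
theorem stmt12 (F : ℝ → ℝ) (hFc : Continuous F) (hF0 : F 0 = 0)
    (hFpos : ∀ x : ℝ, x ≠ 0 → 0 < F x) (ℓ : ℕ) (hℓ : 2 ≤ ℓ) :
    ∃ ε₀ > (0:ℝ), ∀ ε : ℝ, ε₀ < ε →
      psi ε F 2 = 2 ∧
      ∀ k : ℕ, 2 ≤ k → k ≤ ℓ →
        ∃ β : ℝ, (k : ℝ) < β ∧ β < (k : ℝ) + 1 ∧ psi ε F β = β :=
  stmt12_general hFc.continuousOn hF0 (fun x hx => hFpos x hx.ne') ℓ
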